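/- Let n ≥ 2, let η be the pseudo-Euclidean bilinear form of signature (2, n−1) on ℝ^{n+1}, let ξ : ℝ^{n+1} → ℝ^{n+1} be an η-skew linear map, and let N, X satisfy η(N,N) = −1, X ≠ 0, η(X,X) = 0, η(N,X) = 0, η(X, ξN) = 0, and suppose X is not an eigenvector of ξ. Then ξX is spacelike: η(ξX, ξX) > 0. -/

import Mathlib

/-!
Skewness makes `W = ξ X` orthogonal to both `N` and `X`, so on combinations of `N`, `X`, `W`
the form is `η(aN + bX + cW) = -a² + c² η(W, W)`. If `η(W, W) ≤ 0` this is nonpositive.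
Since there are only two timelike directions, some nontrivial combination has vanishing
timelike coordinates (`exists_combination_spatial`); the form is positive definite on such
vectors (`eq_zero_of_eta_self_nonpos`), so the combination is zero. Pairing with `N` gives
`a = 0`, and then `X = 0` or `W` is a multiple of `X`, both of which are excluded.
-/

/-- The pseudo-Euclidean bilinear form of signature `(2, m-2)` on `ℝ^m`:
`η(u,v) = -u₀v₀ - u₁v₁ + ∑_{i≥2} uᵢvᵢ`. -/
noncomputable def eta {m : ℕ} (u v : Fin m → ℝ) : ℝ :=
  ∑ i : Fin m, (if (i : ℕ) < 2 then (-1 : ℝ) else 1) * (u i * v i)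

theorem eta_comm {m : ℕ} (u v : Fin m → ℝ) : eta u v = eta v u := by
  simp only [eta, mul_comm (u _)]

theorem eta_add_left {m : ℕ} (u v w : Fin m → ℝ) : eta (u + v) w = eta u w + eta v w := by
  simp only [eta, ← Finset.sum_add_distrib, Pi.add_apply]
  exact Finset.sum_congr rfl fun i _ => by ring

theorem eta_smul_left {m : ℕ} (a : ℝ) (u w : Fin m → ℝ) : eta (a • u) w = a * eta u w := by
  simp only [eta, Finset.mul_sum, Pi.smul_apply, smul_eq_mul]
  exact Finset.sum_congr rfl fun i _ => by ring

/-- `eta` is positive definite on the vectors whose two timelike coordinates vanish. -/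
theorem eq_zero_of_eta_self_nonpos {m : ℕ} (u : Fin m → ℝ)
    (ht : ∀ i : Fin m, (i : ℕ) < 2 → u i = 0) (hu : eta u u ≤ 0) : u = 0 := by
  have hsum : eta u u = ∑ i, u i * u i := by
    refine Finset.sum_congr rfl fun i _ => ?_
    split_ifs with hi
    · simp [ht i hi]
    · ring
  have h0 : ∑ i, u i * u i = 0 :=
    le_antisymm (hsum ▸ hu) (Finset.sum_nonneg fun i _ => mul_self_nonneg _)
  rw [Finset.sum_eq_zero_iff_of_nonneg fun i _ => mul_self_nonneg _] at h0
  funext i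
  exact mul_self_eq_zero.mp (h0 i (Finset.mem_univ i))

/-- Any three vectors have a nontrivial combination whose two timelike coordinates vanish. -/
theorem exists_combination_spatial {m : ℕ} (hm : 2 ≤ m) (u v w : Fin m → ℝ) :
    ∃ a b c : ℝ, ¬ (a = 0 ∧ b = 0 ∧ c = 0) ∧
      ∀ i : Fin m, (i : ℕ) < 2 → (a • u + b • v + c • w) i = 0 := by
  let i₀ : Fin m := ⟨0, by omega⟩
  let i₁ : Fin m := ⟨1, by omega⟩
  let M : Matrix (Fin 2) (Fin 3) ℝ := !![u i₀, v i₀, w i₀; u i₁, v i₁, w i₁]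
  have hker : LinearMap.ker M.mulVecLin ≠ ⊥ :=
    LinearMap.ker_ne_bot_of_finrank_lt (by simp)
  obtain ⟨x, hx, hx0⟩ := Submodule.exists_mem_ne_zero_of_ne_bot hker
  rw [LinearMap.mem_ker, Matrix.mulVecLin_apply] at hx
  have h0 := congrFun hx 0
  have h1 := congrFun hx 1
  simp [M, Matrix.mulVec, dotProduct, Fin.sum_univ_three] at h0 h1
  refine ⟨x 0, x 1, x 2, ?_, ?_⟩
  · rintro ⟨ha, hb, hc⟩
    apply hx0
    funext j
    fin_cases j <;> assumption
  · rintro ⟨i, him⟩ hi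
    simp only [Pi.add_apply, Pi.smul_apply, smul_eq_mul]
    simp only at hi
    interval_cases i
    · linarith
    · linarith

/-- if X is not an eigenvector of ξ then ξX is spacelike. -/
theorem xiX_spacelike (n : ℕ) (hn : 2 ≤ n)
    (ξ : (Fin (n + 1) → ℝ) →ₗ[ℝ] (Fin (n + 1) → ℝ))
    (hskew : ∀ u v : Fin (n + 1) → ℝ, eta (ξ u) v + eta u (ξ v) = 0)
    (N X : Fin (n + 1) → ℝ)
    (hN : eta N N = -1) (hX0 : X ≠ 0) (hX : eta X X = 0) (hNX : eta N X = 0)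
    (hXxiN : eta X (ξ N) = 0)
    (hXeig : ¬ (X ≠ 0 ∧ ∃ α : ℝ, ξ X = α • X)) :
    0 < eta (ξ X) (ξ X) := by
  by_contra hW
  push Not at hW
  have hXW : eta X (ξ X) = 0 := by
    have h := hskew X X
    rw [eta_comm (ξ X) X] at h
    linarith
  have hNW : eta N (ξ X) = 0 := by
    have h := hskew N X
    rw [eta_comm (ξ N) X] at h
    linarith
  obtain ⟨a, b, c, hne, ht⟩ := exists_combination_spatial (by omega) N X (ξ X)
  have hexp : ∀ w, eta (a • N + b • X + c • ξ X) w
      = a * eta N w + b * eta X w + c * eta (ξ X) w := fun w => by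
    simp only [eta_add_left, eta_smul_left]
  have hZN : eta (a • N + b • X + c • ξ X) N = -a := by
    rw [hexp, hN, eta_comm X N, eta_comm (ξ X) N, hNX, hNW]
    ring
  have hZX : eta (a • N + b • X + c • ξ X) X = 0 := by
    rw [hexp, hNX, hX, eta_comm (ξ X) X, hXW]
    ring
  have hZW : eta (a • N + b • X + c • ξ X) (ξ X) = c * eta (ξ X) (ξ X) := by
    rw [hexp, hNW, hXW]
    ring
  have hZ : a • N + b • X + c • ξ X = 0 := by
    refine eq_zero_of_eta_self_nonpos _ ht ?_
    rw [hexp, eta_comm N, eta_comm X, eta_comm (ξ X), hZN, hZX, hZW]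
    nlinarith [sq_nonneg a, mul_nonneg (sq_nonneg c) (neg_nonneg.mpr hW)]
  have ha : a = 0 := by
    rw [hZ] at hZN
    simp [eta] at hZN
    exact hZN
  rw [ha, zero_smul, zero_add] at hZ
  by_cases hc : c = 0
  · rw [hc, zero_smul, add_zero] at hZ
    rcases smul_eq_zero.mp hZ with hb | hb
    · exact hne ⟨ha, hb, hc⟩
    · exact hX0 hb
  · refine hXeig ⟨hX0, -(c⁻¹ * b), ?_⟩
    have h : c • ξ X = -(b • X) := by
      exact eq_neg_of_add_eq_zero_right hZ
    rw [← inv_smul_smul₀ hc (ξ X), h, smul_neg, neg_smul, smul_smul]
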